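/- arXiv:2404.07276 — 2 statements merged into one kernel-verified Lean document; each statement's English description precedes it below -/
import Mathlib

section
/- (Convolution estimate.) Let d ≥ 1 and 0 < α < 1. There exists a constant C₁ = C₁(d, α) < ∞ such that for every real R ≥ 1 and every x ∈ ℤ^d with ‖x‖ ≥ R: Σ_{a∈ℤ^d, ‖a‖ ≤ ‖x‖/4} Σ_{b∈ℤ^d, ‖b−x‖ ≤ ‖x‖/4} ⟨a⟩^{−d−α} ⟨a−b⟩^{−d−α} ⟨b−x⟩^{−d−α} min{1, ⟨a⟩/R} min{1, ⟨x−b⟩/R} ≤ C₁ R^{−2α} ⟨x⟩^{−d−α}. -/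
open MeasureTheory ENNReal

namespace LRP

/-- The vertex set `ℤ^d`. -/
abbrev V (d : ℕ) : Type := Fin d → ℤ

/-- The `ℓ^∞` norm of a lattice point, as a natural number. -/
def normInf {d : ℕ} (x : V d) : ℕ := Finset.univ.sup fun i => (x i).natAbs

/-- A percolation configuration: each (unordered) pair of vertices is open or closed. -/
abbrev Config (d : ℕ) : Type := Sym2 (V d) → Bool

/-- The probability `1 - exp (-β J(x,y))` that the edge `e = {x,y}` is open
(the symmetrization `(J x y + J y x)/2` equals `J x y` for symmetric `J`). -/
noncomputable def edgeProb {d : ℕ} (J : V d → V d → ℝ) (β : ℝ) (e : Sym2 (V d)) : ℝ≥0∞ :=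
  ENNReal.ofReal (1 - Real.exp (-β *
    Sym2.lift ⟨fun x y => (J x y + J y x) / 2, fun x y => by dsimp only; rw [add_comm]⟩ e))

/-- `IsLRP J P` asserts that for each `β`, `P β` is the law of long-range percolation on `ℤ^d`
with kernel `J` at inverse temperature `β`: distinct edges are open independently, edge `{x,y}`
being open with probability `1 - exp (-β J(x,y))`.  This is expressed by prescribing the
probability of every finite cylinder event, which characterizes the measure uniquely. -/
def IsLRP {d : ℕ} (J : V d → V d → ℝ) (P : ℝ → Measure (Config d)) : Prop :=
  ∀ (β : ℝ) (s : Finset (Sym2 (V d))) (f : Sym2 (V d) → Bool),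
    P β {ω | ∀ e ∈ s, ω e = f e} =
      ∏ e ∈ s, (if f e then edgeProb J β e else 1 - edgeProb J β e)

/-- Two vertices are adjacent if they are distinct and the edge between them is open. -/
def adj {d : ℕ} (ω : Config d) (x y : V d) : Prop := x ≠ y ∧ ω s(x, y) = true

/-- `x ↔ y`: the vertices are connected by a path of open edges. -/
def conn {d : ℕ} (ω : Config d) (x y : V d) : Prop := Relation.ReflTransGen (adj ω) x y

/-- `x ↔ y` inside `A`: connected by an open path all of whose vertices lie in `A`. -/
def connIn {d : ℕ} (ω : Config d) (A : Set (V d)) (x y : V d) : Prop :=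
  x ∈ A ∧ y ∈ A ∧ Relation.ReflTransGen (fun a b => a ∈ A ∧ b ∈ A ∧ adj ω a b) x y

/-- The cluster of `x`. -/
def cluster {d : ℕ} (ω : Config d) (x : V d) : Set (V d) := {y | conn ω x y}

/-- The critical point `β_c`. -/
noncomputable def betaC {d : ℕ} (P : ℝ → Measure (Config d)) : ℝ :=
  sInf {β : ℝ | 0 ≤ β ∧ 0 < P β {ω | ∃ x, (cluster ω x).Infinite}}

/-- The two-point function `ℙ_β(x ↔ y)`. -/
noncomputable def twoPoint {d : ℕ} (P : ℝ → Measure (Config d)) (β : ℝ) (x y : V d) : ℝ≥0∞ :=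
  P β {ω | conn ω x y}

/-- The susceptibility `χ(β) = Σ_x ℙ_β(0 ↔ x)`. -/
noncomputable def chi {d : ℕ} (P : ℝ → Measure (Config d)) (β : ℝ) : ℝ≥0∞ :=
  ∑' x : V d, twoPoint P β 0 x

/-- `Σ_{x ∈ [-n,n]^d} ℙ_β(0 ↔ x)`. -/
noncomputable def boxSum {d : ℕ} (P : ℝ → Measure (Config d)) (β : ℝ) (n : ℕ) : ℝ≥0∞ :=
  ∑' x : V d, if normInf x ≤ n then twoPoint P β 0 x else 0

/-- The correlation length `ξ(β) = inf {r ≥ 1 : Σ_{x ∈ [-r,r]^d} ℙ_β(0↔x) ≥ χ(β)/2}`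
(`= ∞` if no such `r` exists). -/
noncomputable def xi {d : ℕ} (P : ℝ → Measure (Config d)) (β : ℝ) : ℝ≥0∞ :=
  sInf {r : ℝ≥0∞ | ∃ n : ℕ, r = (n : ℝ≥0∞) ∧ 1 ≤ n ∧ chi P β ≤ 2 * boxSum P β n}

/-- The triangle diagram `∇_β`. -/
noncomputable def triangle {d : ℕ} (P : ℝ → Measure (Config d)) (β : ℝ) : ℝ≥0∞ :=
  ∑' x : V d, ∑' y : V d, twoPoint P β 0 x * twoPoint P β x y * twoPoint P β y 0

/-- The standing assumptions on the kernel `J`: symmetric, integrable, translation-invariant,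
with `c ‖x-y‖^{-d-α} ≤ J(x,y) ≤ C ‖x-y‖^{-d-α}` for distinct `x, y`, where `0 < α < d`. -/
structure KernelHyp (d : ℕ) (J : V d → V d → ℝ) (α c C : ℝ) : Prop where
  d_pos : 1 ≤ d
  symm : ∀ x y, J x y = J y x
  transInv : ∀ x y z : V d, J (x + z) (y + z) = J x y
  nonneg : ∀ x y, 0 ≤ J x y
  integrable : Summable fun x : V d => J 0 x
  alpha_pos : 0 < α
  alpha_lt_d : α < (d : ℝ)
  c_pos : 0 < c
  c_le_C : c ≤ C
  lower : ∀ x y : V d, x ≠ y → c * (normInf (x - y) : ℝ) ^ (-(d : ℝ) - α) ≤ J x y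
  upper : ∀ x y : V d, x ≠ y → J x y ≤ C * (normInf (x - y) : ℝ) ^ (-(d : ℝ) - α)

theorem normInf_le_iff {d : ℕ} (x : V d) (n : ℕ) : normInf x ≤ n ↔ ∀ i, (x i).natAbs ≤ n := by
  simp [normInf, Finset.sup_le_iff]

/-- the box -/
noncomputable def bx (d : ℕ) (n : ℕ) : Finset (V d) := Fintype.piFinset fun _ => Finset.Icc (-(n : ℤ)) n

theorem mem_bx {d : ℕ} (x : V d) (n : ℕ) : x ∈ bx d n ↔ normInf x ≤ n := by
  rw [normInf_le_iff, bx, Fintype.mem_piFinset]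
  refine forall_congr' fun i => ?_
  rw [Finset.mem_Icc]; omega

theorem card_bx (d n : ℕ) : (bx d n).card = (2 * n + 1) ^ d := by
  simp only [bx, Fintype.card_piFinset, Int.card_Icc, Finset.prod_const, Finset.card_univ,
    Fintype.card_fin]
  congr 1; omega

theorem normInf_neg {d : ℕ} (x : V d) : normInf (-x) = normInf x := by
  simp [normInf]

theorem normInf_add_le {d : ℕ} (x y : V d) : normInf (x + y) ≤ normInf x + normInf y := by
  rw [normInf_le_iff]
  intro i
  have h1 := (normInf_le_iff x _).1 le_rfl i
  have h2 := (normInf_le_iff y _).1 le_rfl i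
  simp only [Pi.add_apply]; omega

theorem sum_dist_le {r : ℝ} (hr0 : 0 ≤ r) (hr1 : r < 1) :
    ∃ C : ℝ, 0 < C ∧ ∀ K M : ℕ, ∑ k ∈ Finset.range M, r ^ ((k : ℤ) - K).natAbs ≤ C := by
  have hs : Summable fun j : ℤ => r ^ j.natAbs := by
    apply Summable.of_nat_of_neg <;> simpa using summable_geometric_of_lt_one hr0 hr1
  refine ⟨(∑' j : ℤ, r ^ j.natAbs) + 1, ?_, ?_⟩
  · have : 0 ≤ ∑' j : ℤ, r ^ j.natAbs := tsum_nonneg fun j => by positivity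
    linarith
  intro K M
  have inj : Function.Injective fun k : ℕ => (k : ℤ) - K := fun a b h => by
    simp only at h; omega
  have e := Finset.sum_map (Finset.range M) ⟨_, inj⟩ (fun j : ℤ => r ^ j.natAbs)
  simp only [Function.Embedding.coeFn_mk] at e
  rw [← e]
  have := hs.sum_le_tsum (Finset.map ⟨_, inj⟩ (Finset.range M)) (fun j _ => by positivity)
  linarith

theorem scal {α : ℝ} (hα0 : 0 < α) (hα1 : α < 1) {ε : ℝ} (h1 : ε ≤ α) (h2 : ε ≤ 1 - α)
    {k K : ℕ} {t R : ℝ} (ht : (2:ℝ) ^ k ≤ t) (ht' : t ≤ 2 ^ (k+1)) (hR : (2:ℝ) ^ K ≤ R)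
    (hR' : R ≤ 2 ^ (K+1)) :
    t ^ (-α) * min 1 (t / R) ≤ 2 * ((2:ℝ) ^ (-ε)) ^ ((k : ℤ) - K).natAbs * R ^ (-α) := by
  have ht0 : 0 < t := lt_of_lt_of_le (by positivity) ht
  have hR0 : 0 < R := lt_of_lt_of_le (by positivity) hR
  set u := t / R with hu
  have hu0 : 0 < u := by positivity
  have htu : t = u * R := by rw [hu]; field_simp
  have e : t ^ (-α) = u ^ (-α) * R ^ (-α) := by
    rw [htu, Real.mul_rpow hu0.le hR0.le]
  rw [e]
  suffices h : u ^ (-α) * min 1 u ≤ 2 * ((2:ℝ) ^ (-ε)) ^ ((k : ℤ) - K).natAbs by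
    calc _ = (u ^ (-α) * min 1 u) * R ^ (-α) := by ring
      _ ≤ _ := by gcongr
  rw [← Real.rpow_mul_natCast (by norm_num)]
  rcases le_or_gt K k with hk | hk
  · obtain ⟨j, rfl⟩ := Nat.exists_eq_add_of_le hk
    have : (((K + j : ℕ) : ℤ) - K).natAbs = j := by omega
    rw [this]
    have hlow : (2:ℝ) ^ ((j:ℝ) - 1) ≤ u := by
      rw [hu, le_div_iff₀ hR0]
      calc (2:ℝ) ^ ((j:ℝ) - 1) * R ≤ (2:ℝ) ^ ((j:ℝ) - 1) * 2 ^ (K+1) := by gcongr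
        _ = 2 ^ (K + j) := by
          rw [← Real.rpow_natCast, ← Real.rpow_natCast, ← Real.rpow_add (by norm_num)]
          congr 1; push_cast; ring
        _ ≤ t := ht
    calc u ^ (-α) * min 1 u ≤ u ^ (-α) * 1 := by gcongr; exact min_le_left _ _
      _ ≤ ((2:ℝ) ^ ((j:ℝ) - 1)) ^ (-α) := by
        rw [mul_one]
        exact Real.rpow_le_rpow_of_nonpos (by positivity) hlow (by linarith)
      _ = 2 ^ (((j:ℝ) - 1) * (-α)) := by rw [← Real.rpow_mul (by norm_num)]
      _ ≤ 2 ^ (1 + -ε * j) := by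
        apply Real.rpow_le_rpow_of_exponent_le (by norm_num)
        have : (0:ℝ) ≤ j := by positivity
        nlinarith
      _ = _ := by rw [Real.rpow_add (by norm_num), Real.rpow_one]
  · obtain ⟨j, rfl⟩ := Nat.exists_eq_add_of_le hk.le
    have : ((k : ℤ) - (k + j : ℕ)).natAbs = j := by omega
    rw [this]
    have hup : u ≤ (2:ℝ) ^ (1 - (j:ℝ)) := by
      rw [hu, div_le_iff₀ hR0]
      calc t ≤ 2 ^ (k + 1) := ht'
        _ = (2:ℝ) ^ (1 - (j:ℝ)) * 2 ^ (k + j) := by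
          rw [← Real.rpow_natCast, ← Real.rpow_natCast, ← Real.rpow_add (by norm_num)]
          congr 1; push_cast; ring
        _ ≤ _ := by gcongr
    calc u ^ (-α) * min 1 u ≤ u ^ (-α) * u := by gcongr; exact min_le_right _ _
      _ = u ^ (1 - α) := by
        rw [sub_eq_neg_add, Real.rpow_add hu0, Real.rpow_one]
      _ ≤ ((2:ℝ) ^ (1 - (j:ℝ))) ^ (1 - α) := by gcongr
      _ = 2 ^ ((1 - (j:ℝ)) * (1 - α)) := by rw [← Real.rpow_mul (by norm_num)]
      _ ≤ 2 ^ (1 + -ε * j) := by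
        apply Real.rpow_le_rpow_of_exponent_le (by norm_num)
        have : (0:ℝ) ≤ j := by positivity
        nlinarith
      _ = _ := by rw [Real.rpow_add (by norm_num), Real.rpow_one]

theorem single_sum {d : ℕ} {α : ℝ} (hα0 : 0 < α) (hα1 : α < 1) :
    ∃ C : ℝ, 0 < C ∧ ∀ R : ℝ, 1 ≤ R → ∀ N : ℕ,
      ∑ a ∈ bx d N, max 2 (normInf a : ℝ) ^ (-(d : ℝ) - α) * min 1 (max 2 (normInf a : ℝ) / R)
        ≤ C * R ^ (-α) := by
  set ε := min α (1 - α) with hε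
  have hε0 : 0 < ε := lt_min hα0 (by linarith)
  have hr1 : (2:ℝ) ^ (-ε) < 1 := Real.rpow_lt_one_of_one_lt_of_neg (by norm_num) (by linarith)
  obtain ⟨C, hC, hCs⟩ := sum_dist_le (r := (2:ℝ) ^ (-ε)) (by positivity) hr1
  refine ⟨5 ^ d * 2 * C, by positivity, ?_⟩
  intro R hR N
  have hR0 : 0 < R := by linarith
  set K := Nat.log 2 ⌊R⌋₊ with hK
  have hfl : ⌊R⌋₊ ≠ 0 := (Nat.floor_pos.2 hR).ne'
  have hK1 : (2:ℝ) ^ K ≤ R := by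
    have h := Nat.pow_log_le_self 2 hfl
    calc (2:ℝ) ^ K = ((2 ^ K : ℕ) : ℝ) := by push_cast; rfl
      _ ≤ (⌊R⌋₊ : ℝ) := by exact_mod_cast h
      _ ≤ R := Nat.floor_le hR0.le
  have hK2 : R ≤ (2:ℝ) ^ (K+1) := by
    have h := Nat.lt_pow_succ_log_self (b := 2) (by norm_num) ⌊R⌋₊
    have h2 : ((⌊R⌋₊ + 1 : ℕ) : ℝ) ≤ ((2 ^ (K+1) : ℕ) : ℝ) := by exact_mod_cast h
    push_cast at h2
    exact (Nat.lt_floor_add_one R).le.trans h2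
  let g : V d → ℕ := fun a => Nat.log 2 (max 2 (normInf a))
  have hmaps : ∀ a ∈ bx d N, g a ∈ Finset.range (max 2 N + 1) := by
    intro a ha
    rw [mem_bx] at ha
    rw [Finset.mem_range]
    have := Nat.log_le_self 2 (max 2 (normInf a))
    simp only [g]; omega
  rw [← Finset.sum_fiberwise_of_maps_to hmaps]
  have hfib : ∀ k ∈ Finset.range (max 2 N + 1),
      ∑ a ∈ bx d N with g a = k,
        max 2 (normInf a : ℝ) ^ (-(d : ℝ) - α) * min 1 (max 2 (normInf a : ℝ) / R)
      ≤ 5 ^ d * 2 * R ^ (-α) * ((2:ℝ) ^ (-ε)) ^ ((k : ℤ) - K).natAbs := by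
    intro k _
    set c := ((2:ℝ) ^ (-ε)) ^ ((k : ℤ) - K).natAbs with hc
    have hc0 : 0 < c := by positivity
    have hpt : ∀ a ∈ (bx d N).filter (fun a => g a = k),
        max 2 (normInf a : ℝ) ^ (-(d : ℝ) - α) * min 1 (max 2 (normInf a : ℝ) / R)
        ≤ ((2:ℝ) ^ k) ^ (-(d:ℝ)) * (2 * c * R ^ (-α)) := by
      intro a ha
      rw [Finset.mem_filter] at ha
      have hg : Nat.log 2 (max 2 (normInf a)) = k := ha.2
      have e : (max 2 (normInf a : ℝ)) = ((max 2 (normInf a) : ℕ) : ℝ) := by push_cast; rfl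
      have h1 : (2:ℝ) ^ k ≤ max 2 (normInf a : ℝ) := by
        rw [e, ← hg]; exact_mod_cast Nat.pow_log_le_self 2 (by omega)
      have h2 : max 2 (normInf a : ℝ) ≤ 2 ^ (k+1) := by
        rw [e, ← hg]
        exact_mod_cast (Nat.lt_pow_succ_log_self (b := 2) (by norm_num) _).le
      have h3 := scal hα0 hα1 (min_le_left _ _) (min_le_right _ _) h1 h2 hK1 hK2
      have ht0 : 0 < max 2 (normInf a : ℝ) := by positivity
      rw [sub_eq_add_neg, Real.rpow_add ht0, mul_assoc]
      refine mul_le_mul ?_ h3 (by positivity) (by positivity)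
      exact Real.rpow_le_rpow_of_nonpos (by positivity) h1 (by simp)
    have hcard : (((bx d N).filter (fun a => g a = k)).card : ℝ) ≤ (5 * 2 ^ k) ^ d := by
      have hsub : (bx d N).filter (fun a => g a = k) ⊆ bx d (2 ^ (k+1)) := by
        intro a ha
        rw [Finset.mem_filter] at ha
        have hg : Nat.log 2 (max 2 (normInf a)) = k := ha.2
        rw [mem_bx, ← hg]
        exact (le_max_right _ _).trans (Nat.lt_pow_succ_log_self (b := 2) (by norm_num) _).le
      have h := Finset.card_le_card hsub
      rw [card_bx] at h
      have h' : (2 * 2 ^ (k+1) + 1) ^ d ≤ (5 * 2 ^ k) ^ d := by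
        apply Nat.pow_le_pow_left
        have := Nat.one_le_two_pow (n := k)
        rw [pow_succ]; omega
      exact_mod_cast h.trans h'
    refine (Finset.sum_le_card_nsmul _ _ _ hpt).trans ?_
    rw [nsmul_eq_mul]
    calc _ ≤ (5 * 2 ^ k) ^ d * (((2:ℝ) ^ k) ^ (-(d:ℝ)) * (2 * c * R ^ (-α))) := by gcongr
      _ = _ := by
        rw [Real.rpow_neg (by positivity), Real.rpow_natCast, mul_pow]
        field_simp
  refine (Finset.sum_le_sum hfib).trans ?_
  rw [← Finset.mul_sum]
  calc _ ≤ 5 ^ d * 2 * R ^ (-α) * C := by gcongr; exact hCs _ _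
    _ = _ := by ring

/-- Deterministic convolution estimate on the lattice: for `0 < α < 1`, `R ≥ 1` and
`‖x‖ ≥ R`, the double sum over `‖a‖ ≤ ‖x‖/4`, `‖b-x‖ ≤ ‖x‖/4` of
`⟨a⟩^{-d-α} ⟨a-b⟩^{-d-α} ⟨b-x⟩^{-d-α} min{1,⟨a⟩/R} min{1,⟨x-b⟩/R}` is at most
`C₁ R^{-2α} ⟨x⟩^{-d-α}`. -/
theorem convolution_estimate {d : ℕ} (hd : 1 ≤ d) {α : ℝ} (hα0 : 0 < α) (hα1 : α < 1) :
    ∃ C₁ : ℝ, 0 < C₁ ∧ ∀ R : ℝ, 1 ≤ R → ∀ x : V d, R ≤ (normInf x : ℝ) →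
      (∑' a : V d, ∑' b : V d,
        (if (normInf a : ℝ) ≤ (normInf x : ℝ) / 4 ∧
            (normInf (b - x) : ℝ) ≤ (normInf x : ℝ) / 4 then
          max 2 (normInf a : ℝ) ^ (-(d : ℝ) - α) *
            max 2 (normInf (a - b) : ℝ) ^ (-(d : ℝ) - α) *
            max 2 (normInf (b - x) : ℝ) ^ (-(d : ℝ) - α) *
            min 1 (max 2 (normInf a : ℝ) / R) *
            min 1 (max 2 (normInf (x - b) : ℝ) / R)
        else 0))
      ≤ C₁ * R ^ (-(2 * α)) * max 2 (normInf x : ℝ) ^ (-(d : ℝ) - α) := by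
  obtain ⟨C, hC, hS⟩ := single_sum (d := d) hα0 hα1
  refine ⟨2 ^ ((d:ℝ) + α) * C * C, by positivity, ?_⟩
  intro R hR x hx
  have hR0 : 0 < R := by linarith
  set N := normInf x with hN
  set F : V d → ℝ := fun a =>
    max 2 (normInf a : ℝ) ^ (-(d : ℝ) - α) * min 1 (max 2 (normInf a : ℝ) / R) with hF
  have hF0 : ∀ a, 0 ≤ F a := fun a => by simp only [hF]; positivity
  set D : ℝ := 2 ^ ((d:ℝ) + α) * max 2 (N : ℝ) ^ (-(d : ℝ) - α) with hD
  have hD0 : 0 ≤ D := by positivity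
  have hsmall : ∀ y : V d, (normInf y : ℝ) ≤ (N : ℝ) / 4 → y ∈ bx d N := by
    intro y hy
    rw [mem_bx]
    have h0 : (0:ℝ) ≤ N := by positivity
    have : (normInf y : ℝ) ≤ N := by linarith
    exact_mod_cast this
  rw [tsum_eq_sum (s := bx d N)]
  swap
  · intro a ha
    have h : ¬ ((normInf a : ℝ) ≤ (N : ℝ) / 4) := fun h => ha (hsmall a h)
    simp [h]
  have hin : ∀ a ∈ bx d N, (∑' b : V d,
        (if (normInf a : ℝ) ≤ (N : ℝ) / 4 ∧
            (normInf (b - x) : ℝ) ≤ (N : ℝ) / 4 then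
          max 2 (normInf a : ℝ) ^ (-(d : ℝ) - α) *
            max 2 (normInf (a - b) : ℝ) ^ (-(d : ℝ) - α) *
            max 2 (normInf (b - x) : ℝ) ^ (-(d : ℝ) - α) *
            min 1 (max 2 (normInf a : ℝ) / R) *
            min 1 (max 2 (normInf (x - b) : ℝ) / R)
        else 0)) ≤ D * F a * (C * R ^ (-α)) := by
    intro a _
    rw [tsum_eq_sum (s := (bx d N).map (addRightEmbedding x))]
    swap
    · intro b hb
      have h : ¬ ((normInf (b - x) : ℝ) ≤ (N : ℝ) / 4) := fun h => hb (by
        rw [Finset.mem_map]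
        exact ⟨b - x, hsmall _ h, by simp⟩)
      simp [h]
    rw [Finset.sum_map]
    refine le_trans (Finset.sum_le_sum (g := fun c => D * F a * F c) ?_) ?_
    · intro c _
      have e1 : addRightEmbedding x c - x = c := by simp
      have e2 : normInf (x - addRightEmbedding x c) = normInf c := by
        rw [← normInf_neg]; simp
      rw [e1, e2]
      split_ifs with h
      · obtain ⟨ha, hc⟩ := h
        have hn : N ≤ normInf (a - addRightEmbedding x c) + normInf a + normInf c := by
          have h1 := normInf_add_le (-(a - addRightEmbedding x c)) a
          have h2 := normInf_add_le (-(a - addRightEmbedding x c) + a) (-c)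
          have h3 : -(a - addRightEmbedding x c) + a + (-c) = x := by simp
          rw [h3, normInf_neg] at h2
          rw [normInf_neg] at h1
          omega
        have hn' : (N:ℝ) ≤ normInf (a - addRightEmbedding x c) + normInf a + normInf c := by
          exact_mod_cast hn
        have hge : max 2 (N:ℝ) / 2 ≤ max 2 (normInf (a - addRightEmbedding x c) : ℝ) := by
          rcases max_cases 2 (N:ℝ) with h | h <;> rw [h.1]
          · exact le_trans (by norm_num) (le_max_left _ _)
          · exact le_trans (by linarith) (le_max_right _ _)
        have hk : max 2 (normInf (a - addRightEmbedding x c) : ℝ) ^ (-(d : ℝ) - α) ≤ D := by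
          refine (Real.rpow_le_rpow_of_nonpos (by positivity) hge ?_).trans ?_
          · have : (0:ℝ) ≤ d := by positivity
            linarith
          · rw [hD, Real.div_rpow (by positivity) (by norm_num), div_eq_mul_inv,
              ← Real.rpow_neg (by norm_num), mul_comm]
            apply le_of_eq; congr 2; ring
        calc _ = max 2 (normInf (a - addRightEmbedding x c) : ℝ) ^ (-(d : ℝ) - α) * (F a * F c) := by
              simp only [hF]; ring
          _ ≤ D * (F a * F c) :=
            mul_le_mul_of_nonneg_right hk (mul_nonneg (hF0 a) (hF0 c))
          _ = _ := by ring
      · exact mul_nonneg (mul_nonneg hD0 (hF0 a)) (hF0 c)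
    · rw [← Finset.mul_sum]
      exact mul_le_mul_of_nonneg_left (hS R hR N) (mul_nonneg hD0 (hF0 a))
  refine (Finset.sum_le_sum hin).trans ?_
  rw [← Finset.sum_mul, ← Finset.mul_sum]
  have hP : 0 ≤ C * R ^ (-α) := by positivity
  calc _ ≤ D * (C * R ^ (-α)) * (C * R ^ (-α)) :=
        mul_le_mul_of_nonneg_right (mul_le_mul_of_nonneg_left (hS R hR N) hD0) hP
    _ = _ := by
      have : R ^ (-(2 * α)) = R ^ (-α) * R ^ (-α) := by
        rw [← Real.rpow_add hR0]; congr 1; ring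
      rw [this, hD]; ring

end LRP
end

section
/- (Averaged box-boundary counting bound.) Let d ≥ 1. There is a constant C₁ = C₁(d) < ∞ such that for every k ≥ 3 and all u, v ∈ ℤ^d: (1/|Λ_{k−3}|) Σ_{z ∈ Λ_{k−3}} 1(u ∈ z + Λ_{k−2} and v ∉ z + Λ_{k−2}) ≤ C₁ min{1, ⟨u−v⟩/2^k}, where 1(·) denotes the indicator function. -/
open MeasureTheory ENNReal

namespace LRP

/-- Coordinate slab. -/
noncomputable def slab (a b : ℤ) (M : ℤ) : Finset ℤ :=
  Finset.Ico (a - M) (b - M) ∪ Finset.Ioc (b + M) (a + M)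

theorem slab_card (a b M : ℤ) (D : ℕ) (h : (a - b).natAbs ≤ D) : (slab a b M).card ≤ 2 * D := by
  refine (Finset.card_union_le _ _).trans ?_
  rw [Int.card_Ico, Int.card_Ioc]
  omega

theorem count_one (n N D : ℕ) (S : Finset ℤ) (hS : S.card ≤ 2 * D) (i : Fin (n + 1)) :
    (Fintype.piFinset (fun j : Fin (n + 1) =>
      if j = i then S else Finset.Icc (-(N : ℤ)) N)).card ≤ 2 * D * (2 * N + 1) ^ n := by
  rw [Fintype.card_piFinset, Fin.prod_univ_succAbove _ i]
  simp only [if_true, Fin.succAbove_ne, if_false, Finset.prod_const, Finset.card_univ,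
    Fintype.card_fin, Int.card_Icc]
  have : ((N : ℤ) + 1 - -(N : ℤ)).toNat = 2 * N + 1 := by omega
  rw [this]
  exact Nat.mul_le_mul_right _ hS

theorem count_bd (n N : ℕ) (u v : V (n + 1)) :
    Set.ncard {z : V (n + 1) | normInf z ≤ N ∧ normInf (u - z) ≤ 2 * N ∧
          2 * N < normInf (v - z)} ≤ (n + 1) * (2 * normInf (u - v) * (2 * N + 1) ^ n) := by
  classical
  have hsub : {z : V (n + 1) | normInf z ≤ N ∧ normInf (u - z) ≤ 2 * N ∧
          2 * N < normInf (v - z)} ⊆ ((Finset.univ.biUnion fun i : Fin (n + 1) =>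
        Fintype.piFinset (fun j : Fin (n + 1) =>
      if j = i then slab (u i) (v i) (2 * N) else Finset.Icc (-(N : ℤ)) N) : Finset (V (n + 1))) :
        Set (V (n + 1))) := by
    rintro z ⟨h1, h2, h3⟩
    rw [normInf_le_iff] at h1 h2
    rw [← not_le, normInf_le_iff] at h3
    push Not at h3
    obtain ⟨i, hi⟩ := h3
    simp only [Finset.coe_biUnion, Set.mem_iUnion, Finset.mem_coe, Fintype.mem_piFinset]
    refine ⟨i, Finset.mem_univ _, fun j => ?_⟩
    have a1 := h1 j
    have a2 := h2 i
    simp only [Pi.sub_apply] at a2 hi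
    split_ifs with hj
    · subst hj
      simp only [slab, Finset.mem_union, Finset.mem_Ico, Finset.mem_Ioc]
      omega
    · rw [Finset.mem_Icc]; omega
  refine (Set.ncard_le_ncard hsub (Finset.finite_toSet _)).trans ?_
  rw [Set.ncard_coe_finset]
  refine Finset.card_biUnion_le.trans ?_
  refine (Finset.sum_le_card_nsmul _ _ (2 * normInf (u - v) * (2 * N + 1) ^ n) ?_).trans ?_
  · intro i _
    exact count_one n N _ _ (slab_card _ _ _ _ ((normInf_le_iff (u - v) _).1 le_rfl i)) i
  · simp

theorem count_tot (n N : ℕ) (u v : V n) :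
    Set.ncard {z : V n | normInf z ≤ N ∧ normInf (u - z) ≤ 2 * N ∧
          2 * N < normInf (v - z)} ≤ (2 * N + 1) ^ n := by
  have hsub : {z : V n | normInf z ≤ N ∧ normInf (u - z) ≤ 2 * N ∧
          2 * N < normInf (v - z)} ⊆ ((Fintype.piFinset (fun _ : Fin n =>
      Finset.Icc (-(N : ℤ)) N) : Finset (V n)) : Set (V n)) := by
    rintro z ⟨h1, -, -⟩
    rw [normInf_le_iff] at h1
    simp only [Finset.mem_coe, Fintype.mem_piFinset]
    intro j
    have := h1 j
    rw [Finset.mem_Icc]; omega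
  refine (Set.ncard_le_ncard hsub (Finset.finite_toSet _)).trans ?_
  rw [Set.ncard_coe_finset, Fintype.card_piFinset]
  simp only [Finset.prod_const, Finset.card_univ, Fintype.card_fin, Int.card_Icc]
  have : ((N : ℤ) + 1 - -(N : ℤ)).toNat = 2 * N + 1 := by omega
  rw [this]

/-- Averaged box-boundary counting bound: for `k ≥ 3` and `u, v ∈ ℤ^d`,
`(1/|Λ_{k-3}|) Σ_{z ∈ Λ_{k-3}} 1(u ∈ z + Λ_{k-2}, v ∉ z + Λ_{k-2}) ≤ C₁ min{1, ⟨u-v⟩/2^k}`,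
where `|Λ_{k-3}| = (2^{k-2}+1)^d`. -/
theorem averaged_box_boundary_bound {d : ℕ} (hd : 1 ≤ d) :
    ∃ C₁ : ℝ, 0 < C₁ ∧ ∀ k : ℕ, 3 ≤ k → ∀ u v : V d,
      (Set.ncard {z : V d | normInf z ≤ 2 ^ (k - 3) ∧ normInf (u - z) ≤ 2 ^ (k - 2) ∧
          2 ^ (k - 2) < normInf (v - z)} : ℝ) / ((2 ^ (k - 2) + 1 : ℝ)) ^ d
      ≤ C₁ * min 1 (max 2 (normInf (u - v) : ℝ) / 2 ^ k) := by
  obtain ⟨n, rfl⟩ : ∃ n, d = n + 1 := ⟨d - 1, by omega⟩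
  refine ⟨8 * (n + 1), by positivity, ?_⟩
  intro k hk u v
  obtain ⟨m, rfl⟩ : ∃ m, k = m + 3 := ⟨k - 3, by omega⟩
  have e1 : m + 3 - 3 = m := by omega
  have e2 : m + 3 - 2 = m + 1 := by omega
  rw [e1, e2]
  have e3 : (2 : ℕ) ^ (m + 1) = 2 * 2 ^ m := by ring
  rw [e3]
  have h1 := count_tot (n + 1) (2 ^ m) u v
  have h2 := count_bd n (2 ^ m) u v
  set c := Set.ncard {z : V (n + 1) | normInf z ≤ 2 ^ m ∧ normInf (u - z) ≤ 2 * 2 ^ m ∧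
          2 * 2 ^ m < normInf (v - z)} with hc
  set D := normInf (u - v) with hD
  have h1' : (c : ℝ) ≤ (2 * 2 ^ m + 1) ^ (n + 1) := by exact_mod_cast h1
  have h2' : (c : ℝ) ≤ (n + 1) * (2 * D * (2 * 2 ^ m + 1) ^ n) := by exact_mod_cast h2
  have e4 : (2 : ℝ) ^ (m + 1) = 2 * 2 ^ m := by ring
  have e5 : (2 : ℝ) ^ (m + 3) = 8 * 2 ^ m := by ring
  rw [e4, e5]
  have hN : (0 : ℝ) < 2 ^ m := by positivity
  generalize (2 : ℝ) ^ m = N at *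
  have hn : (0 : ℝ) ≤ n := Nat.cast_nonneg n
  have hD0 : (0 : ℝ) ≤ D := Nat.cast_nonneg D
  rw [mul_min_of_nonneg _ _ (by positivity), le_min_iff]
  constructor
  · have : (c : ℝ) / (2 * N + 1) ^ (n + 1) ≤ 1 := (div_le_one (by positivity)).2 h1'
    linarith
  · calc (c : ℝ) / (2 * N + 1) ^ (n + 1)
        ≤ ((n + 1) * (2 * D * (2 * N + 1) ^ n)) / (2 * N + 1) ^ (n + 1) := by gcongr
      _ = (n + 1) * (2 * D) / (2 * N + 1) := by
          rw [pow_succ]; field_simp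
      _ ≤ (n + 1) * (2 * D) / (2 * N) := by
          gcongr; linarith
      _ = 8 * (n + 1) * (D / (8 * N)) := by field_simp
      _ ≤ 8 * (n + 1) * (max 2 (D : ℝ) / (8 * N)) := by
          gcongr; exact le_max_right _ _

end LRP
end
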